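/- arXiv:1705.00394 — 3 statements merged into one kernel-verified Lean document; each statement's English description precedes it below -/
import Mathlib

section
/- For any real numbers p > 0 and q > 0, the function α ↦ (α·p + (1−α)·q − p^α q^{1−α}) / (α(1−α)), defined for α ∉ {0, 1}, tends to p·log(p/q) − p + q as α → 1. In other words, the integrand of the α-divergence D_α[p‖q] converges pointwise, as α → 1, to the integrand of the (unnormalized) Kullback–Leibler divergence KL[p‖q]. -/
open Filter Topology

/-! The numerator is the gap in the weighted AM–GM inequality for `p` and `q`. It vanishes at
`α = 1`, as does the denominator, so the limit is the quotient of their derivatives there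
(l'Hôpital's rule), and the derivative of the denominator is `-1`. -/

-- Unlike `HasDerivAt.lhopital_zero_nhdsNE`, this needs no derivatives away from `a`.
theorem tendsto_div_nhdsNE_of_hasDerivAt {𝕜 : Type*} [NontriviallyNormedField 𝕜]
    {f g : 𝕜 → 𝕜} {f' g' a : 𝕜} (hf : HasDerivAt f f' a) (hg : HasDerivAt g g' a)
    (hfa : f a = 0) (hga : g a = 0) (hg' : g' ≠ 0) :
    Tendsto (fun x => f x / g x) (𝓝[≠] a) (𝓝 (f' / g')) := by
  have slope_div_slope : Tendsto (fun x => slope f a x / slope g a x) (𝓝[≠] a) (𝓝 (f' / g')) :=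
    hf.tendsto_slope.div hg.tendsto_slope hg'
  refine slope_div_slope.congr' ?_
  filter_upwards [self_mem_nhdsWithin] with x hx
  rw [slope_def_field, slope_def_field, hfa, hga, sub_zero, sub_zero,
    div_div_div_cancel_right₀ (sub_ne_zero.mpr hx)]

section WeightedMeans

variable {p q : ℝ}

theorem hasDerivAt_rpow_mul_rpow_one_sub (hp : 0 < p) (hq : 0 < q) (α : ℝ) :
    HasDerivAt (fun α : ℝ => p ^ α * q ^ (1 - α)) (p ^ α * q ^ (1 - α) * Real.log (p / q)) α := by
  have hpow_p : HasDerivAt (fun α : ℝ => p ^ α) (Real.log p * p ^ α) α := by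
    simpa using (hasDerivAt_id' α).const_rpow hp
  have hpow_q : HasDerivAt (fun α : ℝ => q ^ (1 - α)) (-(Real.log q * q ^ (1 - α))) α := by
    simpa using ((hasDerivAt_id' α).const_sub 1).const_rpow hq
  refine (hpow_p.mul hpow_q).congr_deriv ?_
  rw [Real.log_div hp.ne' hq.ne']
  ring

theorem hasDerivAt_weighted_am_sub_gm (hp : 0 < p) (hq : 0 < q) (α : ℝ) :
    HasDerivAt (fun α : ℝ => α * p + (1 - α) * q - p ^ α * q ^ (1 - α))
      (p - q - p ^ α * q ^ (1 - α) * Real.log (p / q)) α := by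
  have arith_mean : HasDerivAt (fun α : ℝ => α * p + (1 - α) * q) (p - q) α := by
    simpa [← sub_eq_add_neg] using
      ((hasDerivAt_id' α).mul_const p).fun_add (((hasDerivAt_id' α).const_sub 1).mul_const q)
  exact arith_mean.sub (hasDerivAt_rpow_mul_rpow_one_sub hp hq α)

end WeightedMeans

theorem hasDerivAt_mul_one_sub {𝕜 : Type*} [NontriviallyNormedField 𝕜] (x : 𝕜) :
    HasDerivAt (fun x : 𝕜 => x * (1 - x)) (1 - 2 * x) x := by
  refine ((hasDerivAt_id' x).mul ((hasDerivAt_id' x).const_sub 1)).congr_deriv ?_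
  ring

/-- The integrand of the `α`-divergence tends, as `α → 1`, to the integrand of the
(unnormalized) Kullback–Leibler divergence `KL[p‖q]`. -/
theorem alpha_divergence_integrand_tendsto_KL_p_q
    (p q : ℝ) (hp : 0 < p) (hq : 0 < q) :
    Tendsto (fun α : ℝ => (α * p + (1 - α) * q - p ^ α * q ^ (1 - α)) / (α * (1 - α)))
      (𝓝[≠] 1) (𝓝 (p * Real.log (p / q) - p + q)) := by
  have limit_eq : p * Real.log (p / q) - p + q =
      (p - q - p ^ (1 : ℝ) * q ^ (1 - 1 : ℝ) * Real.log (p / q)) / (1 - 2 * 1) := by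
    rw [sub_self, Real.rpow_one, Real.rpow_zero]
    ring
  rw [limit_eq]
  exact tendsto_div_nhdsNE_of_hasDerivAt (hasDerivAt_weighted_am_sub_gm hp hq 1)
    (hasDerivAt_mul_one_sub 1) (by simp) (by simp) (by norm_num)
end

section
/- Let X be a nonempty finite type, let r : X → ℝ and g : X → ℝ be strictly positive functions, and let α ∈ ℝ \ {0, 1}. For a > 0 define the local α-divergence objective F(a) = ∑_{x∈X} (α·g(x)r(x) + (1−α)·a·r(x) − (g(x)r(x))^α (a·r(x))^{1−α}) / (α(1−α)). Then F is strictly convex on (0, ∞) (its second derivative is F″(a) = a^{−α−1} ∑_x g(x)^α r(x) > 0), its derivative vanishes exactly at a* = (∑_x g(x)^α r(x) / ∑_x r(x))^{1/α}, and a* is the unique global minimizer of F on (0, ∞). -/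
open Filter Topology

/-!
In the second argument `q`, the summand of `D_α[p ‖ q]` has derivative `(1 - (p / q) ^ α) / α`.
Along `p = g * r` and `q = a • r` the weights `r` cancel in the ratio, so with `R = ∑ r` and
`S = ∑ g ^ α * r` the objective satisfies `F' a = (R - S * a ^ (-α)) / α` on `(0, ∞)`. Everything
else is read off from this formula: `F'' a = a ^ (-α - 1) * S` is positive, `F'` vanishes exactly
when `a ^ α = S / R`, and a critical point of a strictly convex function is its unique minimizer.
-/

/-- The `α`-divergence `D_α[p ‖ q]` between unnormalized weights on a finite type. It is meant for
`α ∉ {0, 1}` and nonnegative weights: at `α = 0` and `α = 1` the division by zero makes it `0`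
instead of a Kullback–Leibler divergence. -/
noncomputable def alphaDivergence {X : Type*} [Fintype X] (α : ℝ) (p q : X → ℝ) : ℝ :=
  ∑ x, (α * p x + (1 - α) * q x - p x ^ α * q x ^ (1 - α)) / (α * (1 - α))

theorem hasDerivAt_alphaDivergence_summand {α p q : ℝ} (hα1 : α ≠ 1) (hp : 0 ≤ p) (hq : 0 < q) :
    HasDerivAt (fun q => (α * p + (1 - α) * q - p ^ α * q ^ (1 - α)) / (α * (1 - α)))
      ((1 - (p / q) ^ α) / α) q := by
  have hα1' : 1 - α ≠ 0 := sub_ne_zero.mpr hα1.symm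
  have hlin : HasDerivAt (fun q => α * p + (1 - α) * q) (1 - α) q := by
    simpa only [id, mul_one] using ((hasDerivAt_id q).const_mul (1 - α)).const_add (α * p)
  have hpow : HasDerivAt (fun q => p ^ α * q ^ (1 - α)) ((1 - α) * (p / q) ^ α) q := by
    refine ((Real.hasDerivAt_rpow_const (p := 1 - α) (.inl hq.ne')).const_mul
      (p ^ α)).congr_deriv ?_
    rw [show 1 - α - 1 = -α by ring, Real.rpow_neg hq.le, Real.div_rpow hp hq.le]
    ring
  refine ((hlin.sub hpow).div_const (α * (1 - α))).congr_deriv ?_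
  rw [← mul_one_sub, mul_comm α, mul_div_mul_left _ _ hα1']

theorem hasDerivAt_alphaDivergence_smul {X : Type*} [Fintype X] {α a : ℝ} {p r : X → ℝ}
    (hα1 : α ≠ 1) (hp : ∀ x, 0 ≤ p x) (hr : ∀ x, 0 < r x) (ha : 0 < a) :
    HasDerivAt (fun a => alphaDivergence α p (a • r))
      (∑ x, (1 - (p x / (a * r x)) ^ α) / α * r x) a := by
  refine .fun_sum fun x _ => ?_
  exact (hasDerivAt_alphaDivergence_summand hα1 (hp x) (mul_pos ha (hr x))).comp a
    (hasDerivAt_mul_const (r x))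

theorem hasDerivAt_alphaDivergence_mul_smul {X : Type*} [Fintype X] {α a : ℝ} {g r : X → ℝ}
    (hα1 : α ≠ 1) (hg : ∀ x, 0 ≤ g x) (hr : ∀ x, 0 < r x) (ha : 0 < a) :
    HasDerivAt (fun a => alphaDivergence α (g * r) (a • r))
      ((∑ x, r x - (∑ x, g x ^ α * r x) * a ^ (-α)) / α) a := by
  refine (hasDerivAt_alphaDivergence_smul hα1
    (fun x => mul_nonneg (hg x) (hr x).le) hr ha).congr_deriv ?_
  rw [Finset.sum_mul, ← Finset.sum_sub_distrib, Finset.sum_div]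
  refine Finset.sum_congr rfl fun x _ => ?_
  rw [mul_div_mul_right _ _ (hr x).ne', Real.div_rpow (hg x) ha.le,
    Real.rpow_neg ha.le]
  ring

theorem lt_of_strictConvexOn_of_hasDerivAt_zero {s : Set ℝ} {f : ℝ → ℝ} {x y : ℝ}
    (hf : StrictConvexOn ℝ s f) (hx : x ∈ s) (hfx : HasDerivAt f 0 x) (hy : y ∈ s) (hyx : y ≠ x) :
    f x < f y := by
  rcases hyx.lt_or_gt with hlt | hgt
  · have hslope : slope f y x < 0 := hf.slope_lt_of_hasDerivAt hy hx hlt hfx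
    rwa [slope_neg_iff_of_le hlt.le] at hslope
  · have hslope : 0 < slope f x y := hf.lt_slope_of_hasDerivAt hx hy hgt hfx
    rwa [slope_pos_iff_of_le hgt.le] at hslope

section PowerDerivative

variable {F : ℝ → ℝ} {R S α a : ℝ}

theorem deriv_deriv_of_hasDerivAt_rpow (hα0 : α ≠ 0)
    (hF : ∀ a ∈ Set.Ioi (0 : ℝ), HasDerivAt F ((R - S * a ^ (-α)) / α) a)
    (ha : a ∈ Set.Ioi (0 : ℝ)) : deriv (deriv F) a = a ^ (-α - 1) * S := by
  have hderiv : deriv F =ᶠ[𝓝 a] fun a => (R - S * a ^ (-α)) / α :=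
    eventuallyEq_of_mem (Ioi_mem_nhds ha) fun b hb => (hF b hb).deriv
  have hpow : HasDerivAt (fun a : ℝ => a ^ (-α)) (-α * a ^ (-α - 1)) a :=
    Real.hasDerivAt_rpow_const (.inl (ne_of_gt ha))
  rw [hderiv.deriv_eq, (((hpow.const_mul S).const_sub R).div_const α).deriv]
  field_simp

theorem deriv_deriv_pos_of_hasDerivAt_rpow (hα0 : α ≠ 0) (hS : 0 < S)
    (hF : ∀ a ∈ Set.Ioi (0 : ℝ), HasDerivAt F ((R - S * a ^ (-α)) / α) a)
    (ha : a ∈ Set.Ioi (0 : ℝ)) : 0 < deriv (deriv F) a := by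
  rw [deriv_deriv_of_hasDerivAt_rpow hα0 hF ha]
  exact mul_pos (Real.rpow_pos_of_pos ha _) hS

theorem strictConvexOn_of_hasDerivAt_rpow (hα0 : α ≠ 0) (hS : 0 < S)
    (hF : ∀ a ∈ Set.Ioi (0 : ℝ), HasDerivAt F ((R - S * a ^ (-α)) / α) a) :
    StrictConvexOn ℝ (Set.Ioi 0) F :=
  strictConvexOn_of_deriv2_pos' (convex_Ioi 0)
    (fun a ha => (hF a ha).continuousAt.continuousWithinAt)
    fun _ ha => deriv_deriv_pos_of_hasDerivAt_rpow hα0 hS hF ha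

theorem sub_mul_rpow_neg_div_eq_zero_iff (hα0 : α ≠ 0) (hR : 0 < R) (hS : 0 ≤ S) (ha : 0 < a) :
    (R - S * a ^ (-α)) / α = 0 ↔ a = (S / R) ^ (1 / α) := by
  have hpow : 0 < a ^ α := Real.rpow_pos_of_pos ha α
  calc (R - S * a ^ (-α)) / α = 0
      ↔ R = S / a ^ α := by
        rw [div_eq_zero_iff, or_iff_left hα0, sub_eq_zero, Real.rpow_neg ha.le, div_eq_mul_inv]
    _ ↔ a ^ α = S / R := by
        rw [eq_div_iff hpow.ne', eq_div_iff hR.ne', mul_comm]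
    _ ↔ a = (S / R) ^ (1 / α) := by
        rw [one_div, Real.eq_rpow_inv ha.le (div_nonneg hS hR.le) hα0]

end PowerDerivative

/-- The local `α`-divergence projection objective
`F a = D_α[g·r ‖ a·r]` on a nonempty finite type is strictly convex on `(0, ∞)`,
its second derivative is `a^(-α-1) ∑ g^α r > 0`, its derivative vanishes exactly at
`a* = ((∑ g^α r)/(∑ r))^(1/α)`, and `a*` is the unique global minimizer on `(0, ∞)`. -/
theorem local_alpha_divergence_projection
    {X : Type*} [Fintype X] [Nonempty X]
    (r g : X → ℝ) (hr : ∀ x, 0 < r x) (hg : ∀ x, 0 < g x)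
    (α : ℝ) (hα0 : α ≠ 0) (hα1 : α ≠ 1)
    (F : ℝ → ℝ)
    (hF : ∀ a ∈ Set.Ioi (0 : ℝ),
      F a = ∑ x, (α * (g x * r x) + (1 - α) * (a * r x) -
        (g x * r x) ^ α * (a * r x) ^ (1 - α)) / (α * (1 - α))) :
    StrictConvexOn ℝ (Set.Ioi 0) F ∧
    (∀ a ∈ Set.Ioi (0 : ℝ),
      deriv (deriv F) a = a ^ (-α - 1) * ∑ x, g x ^ α * r x ∧
      0 < deriv (deriv F) a) ∧
    (∀ a ∈ Set.Ioi (0 : ℝ),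
      (deriv F a = 0 ↔ a = ((∑ x, g x ^ α * r x) / ∑ x, r x) ^ (1 / α))) ∧
    (((∑ x, g x ^ α * r x) / ∑ x, r x) ^ (1 / α) ∈ Set.Ioi (0 : ℝ) ∧
      ∀ a ∈ Set.Ioi (0 : ℝ),
        a ≠ ((∑ x, g x ^ α * r x) / ∑ x, r x) ^ (1 / α) →
        F (((∑ x, g x ^ α * r x) / ∑ x, r x) ^ (1 / α)) < F a) := by
  have hR : 0 < ∑ x, r x := Finset.sum_pos (fun x _ => hr x) Finset.univ_nonempty
  have hS : 0 < ∑ x, g x ^ α * r x :=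
    Finset.sum_pos (fun x _ => mul_pos (Real.rpow_pos_of_pos (hg x) α) (hr x)) Finset.univ_nonempty
  have hF' : ∀ a ∈ Set.Ioi (0 : ℝ),
      HasDerivAt F ((∑ x, r x - (∑ x, g x ^ α * r x) * a ^ (-α)) / α) a := fun a ha =>
    (hasDerivAt_alphaDivergence_mul_smul hα1 (fun x => (hg x).le) hr ha).congr_of_eventuallyEq
      (eventuallyEq_of_mem (Ioi_mem_nhds ha) hF)
  have hconv := strictConvexOn_of_hasDerivAt_rpow hα0 hS hF'
  have hmem : ((∑ x, g x ^ α * r x) / ∑ x, r x) ^ (1 / α) ∈ Set.Ioi (0 : ℝ) :=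
    Real.rpow_pos_of_pos (div_pos hS hR) _
  have hcrit : HasDerivAt F 0 (((∑ x, g x ^ α * r x) / ∑ x, r x) ^ (1 / α)) :=
    (hF' _ hmem).congr_deriv ((sub_mul_rpow_neg_div_eq_zero_iff hα0 hR hS.le hmem).mpr rfl)
  refine ⟨hconv, fun a ha => ⟨?_, ?_⟩, fun a ha => ?_, hmem, fun a ha hne => ?_⟩
  · exact deriv_deriv_of_hasDerivAt_rpow hα0 hF' ha
  · exact deriv_deriv_pos_of_hasDerivAt_rpow hα0 hS hF' ha
  · rw [(hF' a ha).deriv, sub_mul_rpow_neg_div_eq_zero_iff hα0 hR hS.le ha]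
  · exact lt_of_strictConvexOn_of_hasDerivAt_zero hconv hmem hcrit ha hne
end

section
/- Let X be a nonempty finite type and let r : X → ℝ and g : X → ℝ be strictly positive functions. Define F₁(b) = ∑_{x∈X} (g(x)r(x)·log(g(x)/b) − g(x)r(x) + b·r(x)) for b > 0. Then the derivative of F₁ satisfies F₁′(b) = −(1/b) ∑_{x∈X} r(x)·(g(x) − b) = (∑_x r(x) / b)·(b − Ē), where Ē = ∑_x g(x)r(x) / ∑_x r(x) is the r-weighted mean of g. In particular F₁′(b) is a strictly positive multiple of −(Ē − b)/b. -/
/-!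
Since `log (g / b) = log g - log b`, the objective has the form `A - B log b + R b` with
`B = ∫ g r` and `R = ∫ r`, so its derivative is `R - B / b = (R / b) (b - B / R)`. Finite sums
are integrals against the counting measure.
-/

open MeasureTheory

section KLObjective

variable {X : Type*} [MeasurableSpace X] {μ : Measure X} {r g : X → ℝ} {b : ℝ}

/-- The unnormalized Kullback–Leibler divergence `KL[g·r ‖ b·r]` with respect to `μ`, as a
function of the scalar `b`. The common factor `r` is cancelled inside the logarithm. -/
noncomputable def klObjective (μ : Measure X) (r g : X → ℝ) (b : ℝ) : ℝ :=
  ∫ x, (g x * r x * Real.log (g x / b) - g x * r x + b * r x) ∂μ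

theorem klObjective_eq_sub_mul_log_add (hg : ∀ᵐ x ∂μ, g x ≠ 0) (hr_int : Integrable r μ)
    (hgr_int : Integrable (fun x => g x * r x) μ)
    (hlog_int : Integrable (fun x => g x * r x * Real.log (g x)) μ) (hb : b ≠ 0) :
    klObjective μ r g b =
      (∫ x, g x * r x * Real.log (g x) ∂μ) - (∫ x, g x * r x ∂μ)
        - (∫ x, g x * r x ∂μ) * Real.log b + b * ∫ x, r x ∂μ := by
  have expand : ∀ᵐ x ∂μ, g x * r x * Real.log (g x / b) - g x * r x + b * r x =
      g x * r x * Real.log (g x) - g x * r x - g x * r x * Real.log b + b * r x := by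
    filter_upwards [hg] with x hx
    rw [Real.log_div hx hb]
    ring
  have const_int : Integrable (fun x => g x * r x * Real.log (g x) - g x * r x) μ :=
    hlog_int.sub hgr_int
  have const_sub_log_int : Integrable
      (fun x => g x * r x * Real.log (g x) - g x * r x - g x * r x * Real.log b) μ :=
    const_int.sub (hgr_int.mul_const _)
  rw [klObjective, integral_congr_ae expand, integral_add const_sub_log_int (hr_int.const_mul b),
    integral_sub const_int (hgr_int.mul_const _), integral_sub hlog_int hgr_int,
    integral_mul_const, integral_const_mul]

theorem hasDerivAt_klObjective (hg : ∀ᵐ x ∂μ, g x ≠ 0) (hr_int : Integrable r μ)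
    (hgr_int : Integrable (fun x => g x * r x) μ)
    (hlog_int : Integrable (fun x => g x * r x * Real.log (g x)) μ) (hb : b ≠ 0) :
    HasDerivAt (klObjective μ r g) ((∫ x, r x ∂μ) - (∫ x, g x * r x ∂μ) / b) b := by
  have affine_log := (((Real.hasDerivAt_log hb).const_mul (∫ x, g x * r x ∂μ)).const_sub
    ((∫ x, g x * r x * Real.log (g x) ∂μ) - ∫ x, g x * r x ∂μ)).add
      (hasDerivAt_mul_const (∫ x, r x ∂μ) (x := b))
  refine (affine_log.congr_of_eventuallyEq ?_).congr_deriv (by ring)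
  filter_upwards [eventually_ne_nhds hb] with y hy
  exact klObjective_eq_sub_mul_log_add hg hr_int hgr_int hlog_int hy

theorem integral_mul_sub_const (hr_int : Integrable r μ)
    (hgr_int : Integrable (fun x => g x * r x) μ) (b : ℝ) :
    ∫ x, r x * (g x - b) ∂μ = (∫ x, g x * r x ∂μ) - b * ∫ x, r x ∂μ := by
  rw [← integral_const_mul, ← integral_sub hgr_int (hr_int.const_mul b)]
  congr with x
  ring

end KLObjective

theorem KL_objective_derivative_general
    {X : Type*} [MeasurableSpace X] {μ : Measure X} {r g : X → ℝ}
    (hr : 0 < ∫ x, r x ∂μ) (hg : ∀ᵐ x ∂μ, 0 < g x)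
    (hgr_int : Integrable (fun x => g x * r x) μ)
    (hlog_int : Integrable (fun x => g x * r x * Real.log (g x)) μ)
    {F₁ : ℝ → ℝ} (hF₁ : Set.EqOn F₁ (klObjective μ r g) (Set.Ioi 0)) :
    (∀ b ∈ Set.Ioi (0 : ℝ),
      deriv F₁ b = -(1 / b) * ∫ x, r x * (g x - b) ∂μ ∧
      deriv F₁ b = ((∫ x, r x ∂μ) / b) * (b - (∫ x, g x * r x ∂μ) / ∫ x, r x ∂μ)) ∧
    ∃ c > (0 : ℝ), ∀ b ∈ Set.Ioi (0 : ℝ),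
      deriv F₁ b = c * (-(((∫ x, g x * r x ∂μ) / ∫ x, r x ∂μ) - b) / b) := by
  have hr_int : Integrable r μ := .of_integral_ne_zero hr.ne'
  have deriv_eq : ∀ b ∈ Set.Ioi (0 : ℝ),
      deriv F₁ b = (∫ x, r x ∂μ) - (∫ x, g x * r x ∂μ) / b := fun b hb =>
    ((hasDerivAt_klObjective (hg.mono fun _ hx => hx.ne') hr_int hgr_int hlog_int
      (ne_of_gt hb)).congr_of_eventuallyEq (hF₁.eventuallyEq_of_mem (Ioi_mem_nhds hb))).deriv
  refine ⟨fun b hb => ⟨?_, ?_⟩, ∫ x, r x ∂μ, hr, fun b hb => ?_⟩ <;>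
    have hb_ne : b ≠ 0 := ne_of_gt hb
  · rw [deriv_eq b hb, integral_mul_sub_const hr_int hgr_int]
    field_simp
    ring
  · rw [deriv_eq b hb]
    field_simp
  · rw [deriv_eq b hb]
    field_simp
    ring

/-- Derivative of the unnormalized KL objective `F₁ b = KL[g·r ‖ b·r]`:
`F₁′(b) = -(1/b) ∑ r·(g − b) = ((∑ r)/b)·(b − Ē)` where `Ē = (∑ g·r)/(∑ r)` is the
`r`-weighted mean of `g`; in particular `F₁′(b)` is a strictly positive multiple of
`−(Ē − b)/b`. -/
theorem KL_objective_derivative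
    {X : Type*} [Fintype X] [Nonempty X]
    (r g : X → ℝ) (hr : ∀ x, 0 < r x) (hg : ∀ x, 0 < g x)
    (F₁ : ℝ → ℝ)
    (hF₁ : ∀ b ∈ Set.Ioi (0 : ℝ),
      F₁ b = ∑ x, (g x * r x * Real.log (g x / b) - g x * r x + b * r x)) :
    (∀ b ∈ Set.Ioi (0 : ℝ),
      deriv F₁ b = -(1 / b) * ∑ x, r x * (g x - b) ∧
      deriv F₁ b = ((∑ x, r x) / b) * (b - (∑ x, g x * r x) / ∑ x, r x)) ∧
    ∃ c > (0 : ℝ), ∀ b ∈ Set.Ioi (0 : ℝ),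
      deriv F₁ b = c * (-(((∑ x, g x * r x) / ∑ x, r x) - b) / b) := by
  let _ : MeasurableSpace X := ⊤
  simp only [← integral_count] at hF₁ ⊢
  exact KL_objective_derivative_general
    (by simpa only [integral_count] using Finset.sum_pos (fun x _ => hr x) Finset.univ_nonempty)
    (.of_forall hg) .of_finite .of_finite hF₁
end
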